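/- arXiv:2309.13180 — 2 statements merged into one kernel-verified Lean document; each statement's English description precedes it below -/
import Mathlib

section
/- Let G be a finite simple graph with no isolated vertices and let Γ_fec be the set of fractional edge covers of G. Then every extreme point of Γ_fec is a basic fractional edge cover: it takes values only in {0, 1/2, 1}, its support is a vertex-disjoint union of odd cycles and substars of G, and it takes the value 1/2 exactly on the edges belonging to the odd cycles of its support (and the value 1 on the substar edges). -/
open Finset

noncomputable section
open scoped Classical

variable {V : Type*}

/-- The set of admissible densities for a family `Γ` of objects on the edge set of `G`.
Densities are elements of `ℝ^E_{≥0}`, modeled as nonnegative functions on `Sym2 V`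
vanishing outside the edge set of `G`. `ρ` is admissible if `ℓ_ρ(γ) ≥ 1` for all `γ ∈ Γ`. -/
def Adm [Fintype V] [DecidableEq V] (G : SimpleGraph V) (Γ : Set (Sym2 V → ℝ)) :
    Set (Sym2 V → ℝ) :=
  {ρ | (∀ e, 0 ≤ ρ e) ∧ (∀ e ∉ G.edgeSet, ρ e = 0) ∧
    ∀ γ ∈ Γ, 1 ≤ ∑ e ∈ G.edgeFinset, γ e * ρ e}

/-- The `p`-energy of a density `ρ` with edge weights `σ`: `Σ_e σ(e) ρ(e)^p`. -/
def energy [Fintype V] [DecidableEq V] (p : ℝ) (σ : Sym2 V → ℝ) (G : SimpleGraph V)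
    (ρ : Sym2 V → ℝ) : ℝ :=
  ∑ e ∈ G.edgeFinset, σ e * ρ e ^ p

/-- The `p`-modulus of a family `Γ` with edge weights `σ`:
the infimum of the `p`-energy over admissible densities. -/
def Modulus [Fintype V] [DecidableEq V] (p : ℝ) (σ : Sym2 V → ℝ) (G : SimpleGraph V)
    (Γ : Set (Sym2 V → ℝ)) : ℝ :=
  sInf (energy p σ G '' Adm G Γ)

/-- The unweighted 2-energy `Σ_e ρ(e)²`. -/
def energy2 [Fintype V] [DecidableEq V] (G : SimpleGraph V) (ρ : Sym2 V → ℝ) : ℝ :=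
  ∑ e ∈ G.edgeFinset, ρ e ^ 2

/-- The unweighted 2-modulus. -/
def Mod2 [Fintype V] [DecidableEq V] (G : SimpleGraph V) (Γ : Set (Sym2 V → ℝ)) : ℝ :=
  sInf (energy2 G '' Adm G Γ)

/-- `C` is an edge cover of `G`: a set of edges of `G` meeting every vertex. -/
def IsEdgeCover [Fintype V] [DecidableEq V] (G : SimpleGraph V) (C : Finset (Sym2 V)) : Prop :=
  ↑C ⊆ G.edgeSet ∧ ∀ v : V, ∃ e ∈ C, v ∈ e

/-- The family `Γ_ec` of indicator vectors of edge covers of `G`. -/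
def Γec [Fintype V] [DecidableEq V] (G : SimpleGraph V) : Set (Sym2 V → ℝ) :=
  {γ | ∃ C : Finset (Sym2 V), IsEdgeCover G C ∧ γ = fun e => if e ∈ C then 1 else 0}

/-- The family `Γ_fec` of fractional edge covers of `G`: nonnegative vectors on the edge
set with `Σ_{e ∈ δ(v)} γ(e) ≥ 1` at every vertex `v`. -/
def Γfec [Fintype V] [DecidableEq V] (G : SimpleGraph V) : Set (Sym2 V → ℝ) :=
  {γ | (∀ e, 0 ≤ γ e) ∧ (∀ e ∉ G.edgeSet, γ e = 0) ∧
    ∀ v : V, 1 ≤ ∑ e ∈ G.incidenceFinset v, γ e}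

/-- The family `Γ_star` of indicator vectors of the stars `δ(v)`, `v ∈ V`. -/
def Γstar [Fintype V] [DecidableEq V] (G : SimpleGraph V) : Set (Sym2 V → ℝ) :=
  {γ | ∃ v : V, γ = fun e => if e ∈ G.incidenceFinset v then 1 else 0}

/-- The subgraph of `G` whose edge set is the support `{e : γ(e) > 0}` of `γ`. -/
def suppGraph (G : SimpleGraph V) (γ : Sym2 V → ℝ) : SimpleGraph V where
  Adj u v := G.Adj u v ∧ 0 < γ s(u, v)
  symm := by
    constructor
    intro u v h
    refine ⟨h.1.symm, ?_⟩
    rw [Sym2.eq_swap]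
    exact h.2
  loopless := ⟨fun v h => G.loopless.irrefl v h.1⟩

/-- The connected component of `u` in `H` is a substar: all its edges share a common vertex. -/
def IsSubstarComponent (H : SimpleGraph V) (u : V) : Prop :=
  ∃ c : V, ∀ x y : V, H.Adj x y → H.Reachable u x → x = c ∨ y = c

/-- The connected component of `u` in `H` is a cycle of odd length. -/
def IsOddCycleComponent (H : SimpleGraph V) (u : V) : Prop :=
  ∃ (w : V) (c : H.Walk w w), c.IsCycle ∧ Odd c.length ∧ H.Reachable u w ∧
    ∀ x y : V, H.Adj x y → H.Reachable u x → s(x, y) ∈ c.edges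

/-- `γ` is a basic fractional edge cover of `G`: a fractional edge cover taking values
only in `{0, 1/2, 1}`, whose support is a vertex-disjoint union of odd cycles and
substars, with `γ(e) = 1/2` exactly on the edges lying on odd cycles of the support. -/
def IsBasicFEC [Fintype V] [DecidableEq V] (G : SimpleGraph V) (γ : Sym2 V → ℝ) : Prop :=
  γ ∈ Γfec G ∧
  (∀ e, γ e = 0 ∨ γ e = 1 / 2 ∨ γ e = 1) ∧
  (∀ u v : V, (suppGraph G γ).Adj u v →
    IsSubstarComponent (suppGraph G γ) u ∨ IsOddCycleComponent (suppGraph G γ) u) ∧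
  (∀ e ∈ G.edgeSet, (γ e = 1 / 2 ↔ ∃ (w : V) (c : (suppGraph G γ).Walk w w),
    c.IsCycle ∧ Odd c.length ∧ e ∈ c.edges))

/-- The family of basic fractional edge covers of `G`. -/
def Γbfec [Fintype V] [DecidableEq V] (G : SimpleGraph V) : Set (Sym2 V → ℝ) :=
  {γ | IsBasicFEC G γ}

/-! The argument counts dimensions. Call an edge `e` fractional if `γ e ∉ {0, 1}`, let `K` be the
graph of the fractional edges, and let `T` be the set of tight vertices (total weight exactly `1`)
on fractional edges. An extreme point cannot be moved in both directions `±f` inside `Γ_fec`, so no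
nonzero `f` supported on `K` has total weight `0` at every vertex of `T`; hence `|E(K)| ≤ |T|`.
On the other hand every vertex of `T` has degree at least `2` in `K`, so `2|T| ≤ ∑ deg = 2|E(K)|`.
Equality holds throughout: `K` is a disjoint union of cycles through tight vertices. Rigidity now
excludes even cycles (perturb by alternating signs) and every value other than `1/2` on `K`
(perturb by `γ - 1/2`). The edges of value `1` form substars, since one end of each support edge is
tight and a tight end of an edge of value `1` is a leaf. -/

section Polyhedron

variable {𝕜 E ι : Type*} [Field 𝕜] [LinearOrder 𝕜] [IsStrictOrderedRing 𝕜] [AddCommGroup E]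
  [Module 𝕜 E]

lemma eq_zero_of_mem_extremePoints_of_add_mem_of_sub_mem {A : Set E} {x d : E}
    (hx : x ∈ A.extremePoints 𝕜) (hadd : x + d ∈ A) (hsub : x - d ∈ A) : d = 0 := by
  have hmid : x ∈ openSegment 𝕜 (x + d) (x - d) :=
    ⟨1 / 2, 1 / 2, by norm_num, by norm_num, by norm_num, by module⟩
  exact left_eq_add.mp ((mem_extremePoints_iff_left.mp hx).2 _ hadd _ hsub hmid).symm

lemma exists_pos_forall_mul_abs_le [Finite ι] {a b : ι → 𝕜} (hb : ∀ i, 0 ≤ b i)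
    (hab : ∀ i, b i = 0 → a i = 0) : ∃ ε : 𝕜, 0 < ε ∧ ∀ i, ε * |a i| ≤ b i := by
  have hratio : ∀ i, 0 < if a i = 0 then 1 else b i / |a i| := fun i => by
    split_ifs with ha
    · exact one_pos
    · exact div_pos ((hb i).lt_of_ne fun h => ha (hab i h.symm)) (abs_pos.mpr ha)
  obtain ⟨ε, hε, hlt⟩ := Pi.exists_forall_pos_add_lt hratio
  refine ⟨ε, hε, fun i => ?_⟩
  by_cases ha : a i = 0
  · simpa [ha] using hb i
  · have := hlt i
    rw [zero_add, if_neg ha, lt_div_iff₀ (abs_pos.mpr ha)] at this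
    exact this.le

lemma eq_zero_of_mem_extremePoints_of_forall_tight [Finite ι] {W : Submodule 𝕜 E}
    {L : ι → E →ₗ[𝕜] 𝕜} {b : ι → 𝕜} {x d : E}
    (hx : x ∈ {y | y ∈ W ∧ ∀ i, b i ≤ L i y}.extremePoints 𝕜) (hdW : d ∈ W)
    (hd : ∀ i, L i x = b i → L i d = 0) : d = 0 := by
  obtain ⟨hxW, hxL⟩ := extremePoints_subset hx
  obtain ⟨ε, hε, hbound⟩ := exists_pos_forall_mul_abs_le (a := fun i => L i d)
    (fun i => sub_nonneg.mpr (hxL i)) fun i hi => hd i (sub_eq_zero.mp hi)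
  have hbound' : ∀ i, |ε * L i d| ≤ L i x - b i := fun i => by
    rw [abs_mul, abs_of_pos hε]
    exact hbound i
  have hzero : ε • d = 0 := by
    refine eq_zero_of_mem_extremePoints_of_add_mem_of_sub_mem hx
      ⟨W.add_mem hxW (W.smul_mem ε hdW), fun i => ?_⟩
      ⟨W.sub_mem hxW (W.smul_mem ε hdW), fun i => ?_⟩
    · rw [map_add, map_smul, smul_eq_mul]
      linarith [neg_le_of_abs_le (hbound' i)]
    · rw [map_sub, map_smul, smul_eq_mul]
      linarith [le_of_abs_le (hbound' i)]
  exact (smul_eq_zero_iff_right hε.ne').mp hzero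

end Polyhedron

lemma card_le_card_of_linearMap_forall_eq_zero {R α β : Type*} [Ring R] [StrongRankCondition R]
    (L : (α → R) →ₗ[R] β → R) (s : Finset α) (t : Finset β)
    (hL : ∀ f, (∀ a ∉ s, f a = 0) → (∀ b ∈ t, L f b = 0) → f = 0) : #s ≤ #t := by
  let extend : (s → R) →ₗ[R] α → R := Function.ExtendByZero.linearMap R Subtype.val
  have hextend : ∀ g (a : s), extend g a = g a := fun g a =>
    Subtype.val_injective.extend_apply g (0 : α → R) a
  have hinj : Function.Injective (LinearMap.funLeft R R (Subtype.val : t → β) ∘ₗ L ∘ₗ extend) := by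
    refine (injective_iff_map_eq_zero _).mpr fun g hg => ?_
    have hzero : extend g = 0 := by
      refine hL _ (fun a ha => ?_) fun b hb => congrFun hg ⟨b, hb⟩
      exact Function.extend_apply' g (0 : α → R) a fun ⟨a', ha'⟩ => ha (ha' ▸ a'.2)
    ext a
    rw [← hextend g, hzero, Pi.zero_apply, Pi.zero_apply]
  simpa using card_le_of_injective R _ hinj

lemma degree_eq_ite_of_mul_card_edgeFinset_le [Fintype V] (K : SimpleGraph V) [DecidableRel K.Adj]
    [DecidableEq V] {d : ℕ} {T : Finset V} (hcard : 2 * #K.edgeFinset ≤ d * #T)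
    (hdeg : ∀ v ∈ T, d ≤ K.degree v) (v : V) : K.degree v = if v ∈ T then d else 0 := by
  have hle : ∀ v ∈ univ, (if v ∈ T then d else 0) ≤ K.degree v := fun v _ => by
    split_ifs with hv
    exacts [hdeg v hv, Nat.zero_le _]
  have hsum : ∑ v, (if v ∈ T then d else 0) = ∑ v, K.degree v := by
    refine (sum_le_sum hle).antisymm ?_
    rw [K.sum_degrees_eq_twice_card_edges, sum_ite_mem, univ_inter, sum_const, smul_eq_mul,
      mul_comm #T]
    exact hcard
  exact ((sum_eq_sum_iff_of_le hle).mp hsum v (mem_univ v)).symm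

section VertexWeight

variable [Fintype V] {R : Type*}

/-- The linear map taking an edge weighting `f` to its total weight at each vertex. The sum runs
over all of `V`, so for `f` vanishing off the edges of a graph it is the sum over `δ(v)`. -/
def vertexWeight [Semiring R] : (Sym2 V → R) →ₗ[R] V → R where
  toFun f v := ∑ u, f s(v, u)
  map_add' f g := by ext; simp [sum_add_distrib]
  map_smul' c f := by ext; simp [mul_sum]

lemma vertexWeight_apply [Semiring R] (f : Sym2 V → R) (v : V) :
    vertexWeight f v = ∑ u, f s(v, u) := rfl

lemma vertexWeight_single [DecidableEq V] [Semiring R] {a b : V} (hab : a ≠ b) :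
    vertexWeight (Pi.single s(a, b) (1 : R)) = Pi.single a 1 + Pi.single b 1 := by
  ext v
  have hterm : ∀ u, (Pi.single s(a, b) (1 : R) : Sym2 V → R) s(v, u) =
      (if u = b then (Pi.single a 1 : V → R) v else 0) +
        if u = a then (Pi.single b 1 : V → R) v else 0 := fun u => by
    simp only [Pi.single_apply, Sym2.eq_iff]
    split_ifs <;> simp_all
  simp [vertexWeight_apply, hterm, sum_add_distrib]

lemma sum_incidenceFinset_eq_vertexWeight [DecidableEq V] [Semiring R] (G : SimpleGraph V)
    [DecidableRel G.Adj] {f : Sym2 V → R} (hf : ∀ e ∉ G.edgeSet, f e = 0) (v : V) :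
    ∑ e ∈ G.incidenceFinset v, f e = vertexWeight f v := by
  have himage : G.incidenceFinset v = (G.neighborFinset v).image fun u => s(v, u) := by
    ext e
    rw [SimpleGraph.mem_incidenceFinset, mem_image]
    refine ⟨fun ⟨he, hv⟩ => ?_, ?_⟩
    · obtain ⟨u, rfl⟩ := Sym2.mem_iff_exists.mp hv
      exact ⟨u, (G.mem_neighborFinset v u).mpr he, rfl⟩
    · rintro ⟨u, hu, rfl⟩
      exact G.mk'_mem_incidenceSet_left_iff.mpr ((G.mem_neighborFinset v u).mp hu)
  rw [himage, sum_image fun _ _ _ _ h => Sym2.congr_right.mp h, vertexWeight_apply]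
  exact sum_subset (subset_univ _) fun u _ hu => hf _ (by simpa using hu)

lemma vertexWeight_indicator_edgeSet_const [Semiring R] (K : SimpleGraph V) [DecidableRel K.Adj]
    (c : R) (v : V) : vertexWeight (K.edgeSet.indicator fun _ => c) v = K.degree v * c := by
  simp [vertexWeight_apply, Set.indicator_apply, ← sum_filter, ← K.neighborFinset_eq_filter]

end VertexWeight

section AltWeight

variable [DecidableEq V] {R : Type*} [Ring R] {H : SimpleGraph V} {a b : V}

/-- The edge weighting `1, -1, 1, …` along a walk, summed over repeated edges. Along a closed walk
of even length the weights cancel at every vertex. -/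
def altWeight : {a b : V} → H.Walk a b → Sym2 V → R
  | _, _, .nil => 0
  | _, _, .cons (u := u) (v := v) _ p => Pi.single s(u, v) 1 - altWeight p

lemma altWeight_eq_zero_of_notMem_edges (p : H.Walk a b) {e : Sym2 V} (he : e ∉ p.edges) :
    (altWeight p e : R) = 0 := by
  induction p with
  | nil => rfl
  | cons h p ih =>
    rw [SimpleGraph.Walk.edges_cons, List.mem_cons, not_or] at he
    simp [altWeight, he.1, ih he.2]

lemma altWeight_ne_zero [Nontrivial R] {p : H.Walk a b} (hp : p.IsTrail) (hnil : ¬p.Nil) :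
    (altWeight p : Sym2 V → R) ≠ 0 := by
  cases p with
  | nil => exact absurd .nil hnil
  | @cons _ c _ h q =>
    intro hzero
    have hfirst : (altWeight q s(a, c) : R) = 0 :=
      altWeight_eq_zero_of_notMem_edges q ((SimpleGraph.Walk.isTrail_cons h q).mp hp).2
    simpa [altWeight, hfirst] using congrFun hzero s(a, c)

lemma vertexWeight_altWeight [Fintype V] (p : H.Walk a b) :
    vertexWeight (altWeight p : Sym2 V → R) =
      Pi.single a 1 - (-1 : R) ^ p.length • Pi.single b 1 := by
  induction p with
  | nil => simp [altWeight]
  | cons h p ih =>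
    rw [altWeight, map_sub, vertexWeight_single h.ne, ih, SimpleGraph.Walk.length_cons, pow_succ',
      neg_one_mul, neg_smul]
    abel

end AltWeight

section Component

variable {H K : SimpleGraph V} {u v : V}

lemma exists_adj_and_reachable_of_reachable
    (hclosed : ∀ {x y z}, K.Adj x y → H.Adj x z → K.Adj x z) (huv : K.Adj u v) {x : V}
    (hux : H.Reachable u x) : K.Reachable u x ∧ ∃ y, K.Adj x y := by
  obtain ⟨p⟩ := hux
  induction p generalizing v with
  | nil => exact ⟨.refl _, v, huv⟩
  | cons h _ ih =>
    have hK := hclosed huv h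
    obtain ⟨hreach, hadj⟩ := ih hK.symm
    exact ⟨hK.reachable.trans hreach, hadj⟩

lemma isOddCycleComponent_of_isCycles [Finite V] (hKH : K ≤ H)
    (hclosed : ∀ {x y z}, K.Adj x y → H.Adj x z → K.Adj x z) (hcycles : K.IsCycles)
    (hodd : ∀ {w} {c : K.Walk w w}, c.IsCycle → Odd c.length) (huv : K.Adj u v) :
    IsOddCycleComponent H u := by
  have := Fintype.ofFinite V
  obtain ⟨c, hc, hverts⟩ := hcycles.exists_cycle_toSubgraph_verts_eq_connectedComponentSupp
    (c := K.connectedComponentMk u) rfl ⟨v, huv⟩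
  refine ⟨u, c.mapLe hKH, hc.mapLe hKH, ?_, .refl _, fun x y hxy hux => ?_⟩
  · rw [SimpleGraph.Walk.length_map]
    exact hodd hc
  · obtain ⟨hreach, z, hxz⟩ := exists_adj_and_reachable_of_reachable hclosed huv hux
    have hx : x ∈ c.toSubgraph.verts := hverts ▸ SimpleGraph.ConnectedComponent.sound hreach.symm
    rw [SimpleGraph.Walk.edges_mapLe_eq_edges, ← SimpleGraph.Walk.mem_edges_toSubgraph]
    exact (hc.adj_toSubgraph_iff_of_isCycles hcycles hx y).mpr (hclosed hxz hxy)

lemma isSubstarComponent_of_forall_adj_adj {c : V} (hu : u = c ∨ H.Adj c u)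
    (hc : ∀ {x y}, H.Adj c x → H.Adj x y → y = c) : IsSubstarComponent H u := by
  have hcomponent : ∀ {x}, H.Reachable u x → x = c ∨ H.Adj c x := by
    rintro x ⟨p⟩
    induction p with
    | nil => exact hu
    | cons h _ ih =>
      apply ih
      rcases hu with rfl | hu
      exacts [.inr h, .inl (hc hu h)]
  exact ⟨c, fun x y hxy hux => (hcomponent hux).imp_right fun hcx => hc hcx hxy⟩

lemma nontrivial_neighborSet_of_mem_support_cycle {w : V} {c : H.Walk w w} (hc : c.IsCycle)
    (hu : u ∈ c.support) : (H.neighborSet u).Nontrivial := by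
  have hncard := hc.ncard_neighborSet_toSubgraph_eq_two hu
  obtain ⟨x, y, hne, hxy⟩ := Set.ncard_eq_two.mp hncard
  exact (hxy ▸ Set.nontrivial_pair hne).mono (c.toSubgraph.neighborSet_subset u)

end Component

/-- The graph of the fractional edges of `γ`, those of positive value other than `1`. -/
def fracGraph (G : SimpleGraph V) (γ : Sym2 V → ℝ) : SimpleGraph V :=
  (suppGraph G γ).deleteEdges {e | γ e = 1}

lemma fracGraph_adj_iff {G : SimpleGraph V} {γ : Sym2 V → ℝ} {u v : V} :
    (fracGraph G γ).Adj u v ↔ (suppGraph G γ).Adj u v ∧ γ s(u, v) ≠ 1 :=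
  SimpleGraph.deleteEdges_adj

/-- The vertices at which the covering constraint is tight and which lie on a fractional edge. -/
def tightFracVertices [Fintype V] (G : SimpleGraph V) (γ : Sym2 V → ℝ) : Finset V :=
  {v | vertexWeight γ v = 1 ∧ ∃ u, (fracGraph G γ).Adj v u}

lemma mem_tightFracVertices [Fintype V] {G : SimpleGraph V} {γ : Sym2 V → ℝ} {v : V} :
    v ∈ tightFracVertices G γ ↔ vertexWeight γ v = 1 ∧ ∃ u, (fracGraph G γ).Adj v u := by
  simp [tightFracVertices]

section FractionalEdgeCover

variable [Fintype V] [DecidableEq V] {G : SimpleGraph V} {γ : Sym2 V → ℝ} {u v w : V}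

lemma suppGraph_adj_iff (hγ : γ ∈ Γfec G) : (suppGraph G γ).Adj u v ↔ γ s(u, v) ≠ 0 := by
  refine ⟨fun h => h.2.ne', fun h => ⟨?_, (hγ.1 _).lt_of_ne' h⟩⟩
  contrapose! h
  exact hγ.2.1 _ h

/-- The left-hand sides of the inequalities `γ e ≥ 0` and `∑ e ∈ δ(v), γ e ≥ 1` defining
fractional edge covers, as one family of linear functionals. -/
def coverFunctional : Sym2 V ⊕ V → (Sym2 V → ℝ) →ₗ[ℝ] ℝ
  | .inl e => LinearMap.proj e
  | .inr v => LinearMap.proj v ∘ₗ vertexWeight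

/-- The right-hand sides `0` and `1` of the inequalities of `coverFunctional`. -/
def coverBound : Sym2 V ⊕ V → ℝ
  | .inl _ => 0
  | .inr _ => 1

lemma Γfec_eq_polyhedron (G : SimpleGraph V) :
    Γfec G = {γ | γ ∈ Submodule.pi G.edgeSetᶜ (fun _ => (⊥ : Submodule ℝ ℝ)) ∧
      ∀ i, coverBound i ≤ coverFunctional i γ} := by
  ext γ
  have hoff : γ ∈ Submodule.pi G.edgeSetᶜ (fun _ => (⊥ : Submodule ℝ ℝ)) ↔
      ∀ e ∉ G.edgeSet, γ e = 0 := by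
    simp [Submodule.mem_pi]
  simp only [Γfec, Set.mem_ofPred_eq, Sum.forall, coverBound, coverFunctional,
    LinearMap.proj_apply, LinearMap.comp_apply, hoff, and_left_comm (a := ∀ e, 0 ≤ γ e)]
  exact and_congr_right fun hγ => by simp only [sum_incidenceFinset_eq_vertexWeight G hγ]

lemma eq_zero_of_mem_extremePoints_Γfec (hγ : γ ∈ (Γfec G).extremePoints ℝ) {f : Sym2 V → ℝ}
    (hsupp : ∀ e, γ e = 0 → f e = 0) (htight : ∀ v, vertexWeight γ v = 1 → vertexWeight f v = 0) :
    f = 0 := by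
  have hoff := hγ.1.2.1
  rw [Γfec_eq_polyhedron] at hγ
  refine eq_zero_of_mem_extremePoints_of_forall_tight hγ ?_ (Sum.forall.mpr ⟨hsupp, htight⟩)
  exact Submodule.mem_pi.mpr fun e he => hsupp e (hoff e he)

lemma eq_of_suppGraph_adj_of_tight (hγ : γ ∈ Γfec G) (htight : vertexWeight γ u = 1)
    (hone : γ s(u, v) = 1) (huw : (suppGraph G γ).Adj u w) : w = v := by
  by_contra hne
  have hpair : γ s(u, w) + γ s(u, v) ≤ vertexWeight γ u := by
    rw [← sum_pair (f := fun x => γ s(u, x)) hne]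
    exact sum_le_sum_of_subset_of_nonneg (subset_univ _) fun x _ _ => hγ.1 _
  linarith [huw.2]

lemma fracGraph_adj_of_tight (hγ : γ ∈ Γfec G) (htight : vertexWeight γ u = 1)
    (huv : (fracGraph G γ).Adj u v) (huw : (suppGraph G γ).Adj u w) : (fracGraph G γ).Adj u w := by
  rw [fracGraph_adj_iff] at huv ⊢
  refine ⟨huw, fun hone => huv.2 ?_⟩
  rwa [eq_of_suppGraph_adj_of_tight hγ htight hone huv.1]

lemma two_le_degree_fracGraph (hγ : γ ∈ Γfec G) (hv : v ∈ tightFracVertices G γ) :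
    2 ≤ (fracGraph G γ).degree v := by
  obtain ⟨htight, u, hvu⟩ := mem_tightFracVertices.mp hv
  obtain ⟨w, hwu, hvw⟩ : ∃ w ≠ u, (suppGraph G γ).Adj v w := by
    by_contra! hleaf
    have hsum : vertexWeight γ v = γ s(v, u) := Fintype.sum_eq_single u fun w hwu => by
      simpa [suppGraph_adj_iff hγ] using hleaf w hwu
    exact (fracGraph_adj_iff.mp hvu).2 (hsum ▸ htight)
  refine one_lt_card.mpr ⟨w, ?_, u, ?_, hwu⟩
  all_goals rw [SimpleGraph.mem_neighborFinset]
  exacts [fracGraph_adj_of_tight hγ htight hvu hvw, hvu]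

lemma vertexWeight_eq_one_or_of_suppGraph_adj (hγ : γ ∈ (Γfec G).extremePoints ℝ)
    (huv : (suppGraph G γ).Adj u v) : vertexWeight γ u = 1 ∨ vertexWeight γ v = 1 := by
  by_contra! hslack
  have hzero : (Pi.single s(u, v) 1 : Sym2 V → ℝ) = 0 := by
    refine eq_zero_of_mem_extremePoints_Γfec hγ (fun e he => ?_) fun x hx => ?_
    · exact Pi.single_eq_of_ne (by rintro rfl; exact huv.2.ne' he) 1
    · have hxu : x ≠ u := by rintro rfl; exact hslack.1 hx
      have hxv : x ≠ v := by rintro rfl; exact hslack.2 hx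
      simp [vertexWeight_single huv.ne, hxu, hxv]
  exact one_ne_zero (Pi.single_eq_zero_iff.mp hzero)

lemma eq_zero_of_supported_on_fracGraph (hγ : γ ∈ (Γfec G).extremePoints ℝ) {f : Sym2 V → ℝ}
    (hsupp : ∀ e ∉ (fracGraph G γ).edgeSet, f e = 0)
    (htight : ∀ v ∈ tightFracVertices G γ, vertexWeight f v = 0) : f = 0 := by
  refine eq_zero_of_mem_extremePoints_Γfec hγ (Sym2.forall.mpr fun u v huv => ?_) fun v hv => ?_
  · exact hsupp _ fun hadj => (fracGraph_adj_iff.mp hadj).1.2.ne' huv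
  · by_cases hT : v ∈ tightFracVertices G γ
    · exact htight v hT
    · have hisolated : ∀ u, ¬(fracGraph G γ).Adj v u := fun u hvu =>
        hT (mem_tightFracVertices.mpr ⟨hv, u, hvu⟩)
      exact sum_eq_zero fun u _ => hsupp _ (hisolated u)

lemma degree_fracGraph (hγ : γ ∈ (Γfec G).extremePoints ℝ) (v : V) :
    (fracGraph G γ).degree v = if v ∈ tightFracVertices G γ then 2 else 0 := by
  have hcard : #(fracGraph G γ).edgeFinset ≤ #(tightFracVertices G γ) :=
    card_le_card_of_linearMap_forall_eq_zero vertexWeight _ _ fun f hsupp htight =>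
      eq_zero_of_supported_on_fracGraph hγ (fun e he => hsupp e (by simpa using he)) htight
  exact degree_eq_ite_of_mul_card_edgeFinset_le _ (Nat.mul_le_mul_left 2 hcard)
    (fun _ => two_le_degree_fracGraph hγ.1) v

lemma mem_tightFracVertices_of_fracGraph_adj (hγ : γ ∈ (Γfec G).extremePoints ℝ)
    (huv : (fracGraph G γ).Adj u v) : u ∈ tightFracVertices G γ := by
  by_contra hu
  have hpos := (fracGraph G γ).degree_pos_iff_exists_adj u |>.mpr ⟨v, huv⟩
  rw [degree_fracGraph hγ, if_neg hu] at hpos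
  exact hpos.false

lemma fracGraph_adj_of_suppGraph_adj (hγ : γ ∈ (Γfec G).extremePoints ℝ)
    (huv : (fracGraph G γ).Adj u v) (huw : (suppGraph G γ).Adj u w) : (fracGraph G γ).Adj u w :=
  fracGraph_adj_of_tight hγ.1
    (mem_tightFracVertices.mp (mem_tightFracVertices_of_fracGraph_adj hγ huv)).1 huv huw

lemma vertexWeight_indicator_fracGraph (hγ : γ ∈ (Γfec G).extremePoints ℝ)
    (huv : (fracGraph G γ).Adj u v) :
    vertexWeight ((fracGraph G γ).edgeSet.indicator γ) u = vertexWeight γ u := by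
  refine sum_congr rfl fun w _ => Set.indicator_apply_eq_self.mpr fun hnot => ?_
  by_contra hw
  exact hnot (fracGraph_adj_of_suppGraph_adj hγ huv ((suppGraph_adj_iff hγ.1).mpr hw))

lemma eq_half_of_fracGraph_adj (hγ : γ ∈ (Γfec G).extremePoints ℝ)
    (huv : (fracGraph G γ).Adj u v) : γ s(u, v) = 1 / 2 := by
  have hzero : (fracGraph G γ).edgeSet.indicator (γ - fun _ => 1 / 2) = 0 := by
    refine eq_zero_of_supported_on_fracGraph hγ (fun e he => Set.indicator_of_notMem he _)
      fun x hx => ?_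
    obtain ⟨htight, y, hxy⟩ := mem_tightFracVertices.mp hx
    rw [Set.indicator_sub', map_sub, Pi.sub_apply, vertexWeight_indicator_fracGraph hγ hxy,
      vertexWeight_indicator_edgeSet_const, degree_fracGraph hγ, if_pos hx, htight]
    norm_num
  have hvalue := congrFun hzero s(u, v)
  rw [Set.indicator_of_mem ((fracGraph G γ).mem_edgeSet.mpr huv)] at hvalue
  exact sub_eq_zero.mp hvalue

lemma isCycles_fracGraph (hγ : γ ∈ (Γfec G).extremePoints ℝ) : (fracGraph G γ).IsCycles := by
  rintro v ⟨u, hvu⟩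
  rw [← SimpleGraph.coe_neighborFinset, Set.ncard_coe_finset,
    SimpleGraph.card_neighborFinset_eq_degree, degree_fracGraph hγ,
    if_pos (mem_tightFracVertices_of_fracGraph_adj hγ hvu)]

lemma odd_length_of_isCycle_fracGraph (hγ : γ ∈ (Γfec G).extremePoints ℝ)
    {c : (fracGraph G γ).Walk w w} (hc : c.IsCycle) : Odd c.length := by
  by_contra hodd
  refine altWeight_ne_zero (R := ℝ) hc.isTrail hc.not_nil
    (eq_zero_of_supported_on_fracGraph hγ (fun e he => ?_) fun v _ => ?_)
  · exact altWeight_eq_zero_of_notMem_edges c fun h => he (c.edges_subset_edgeSet h)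
  · simp [vertexWeight_altWeight, (Nat.not_odd_iff_even.mp hodd).neg_one_pow]

lemma isOddCycleComponent_of_fracGraph_adj (hγ : γ ∈ (Γfec G).extremePoints ℝ)
    (huv : (fracGraph G γ).Adj u v) : IsOddCycleComponent (suppGraph G γ) u :=
  isOddCycleComponent_of_isCycles (SimpleGraph.deleteEdges_le _)
    (fracGraph_adj_of_suppGraph_adj hγ) (isCycles_fracGraph hγ)
    (odd_length_of_isCycle_fracGraph hγ) huv

lemma eq_of_suppGraph_adj_adj_of_not_tight (hγ : γ ∈ (Γfec G).extremePoints ℝ)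
    (hslack : vertexWeight γ u ≠ 1) (huv : (suppGraph G γ).Adj u v)
    (hvw : (suppGraph G γ).Adj v w) : w = u := by
  have htight := (vertexWeight_eq_one_or_of_suppGraph_adj hγ huv).resolve_left hslack
  refine eq_of_suppGraph_adj_of_tight hγ.1 htight ?_ hvw
  by_contra hne
  have hfrac : (fracGraph G γ).Adj v u := fracGraph_adj_iff.mpr ⟨huv.symm, hne⟩
  exact hslack (mem_tightFracVertices.mp (mem_tightFracVertices_of_fracGraph_adj hγ hfrac.symm)).1

lemma isSubstarComponent_of_eq_one (hγ : γ ∈ (Γfec G).extremePoints ℝ)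
    (huv : (suppGraph G γ).Adj u v) (hone : γ s(u, v) = 1) :
    IsSubstarComponent (suppGraph G γ) u := by
  by_cases hu : vertexWeight γ u = 1
  · by_cases hv : vertexWeight γ v = 1
    · refine isSubstarComponent_of_forall_adj_adj (.inl rfl) fun {x y} hux hxy => ?_
      obtain rfl := eq_of_suppGraph_adj_of_tight hγ.1 hu hone hux
      exact eq_of_suppGraph_adj_of_tight hγ.1 hv (Sym2.eq_swap ▸ hone) hxy
    · exact isSubstarComponent_of_forall_adj_adj (.inr huv.symm)
        (eq_of_suppGraph_adj_adj_of_not_tight hγ hv)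
  · exact isSubstarComponent_of_forall_adj_adj (.inl rfl)
      (eq_of_suppGraph_adj_adj_of_not_tight hγ hu)

lemma ne_one_of_mem_edges_cycle (hγ : γ ∈ (Γfec G).extremePoints ℝ)
    {c : (suppGraph G γ).Walk w w} (hc : c.IsCycle) (huv : s(u, v) ∈ c.edges) :
    γ s(u, v) ≠ 1 := by
  have hno_leaf : ∀ {a b}, s(a, b) ∈ c.edges → γ s(a, b) = 1 → vertexWeight γ a ≠ 1 := by
    intro a b hab hone htight
    obtain ⟨x, hax, hxb⟩ := (nontrivial_neighborSet_of_mem_support_cycle hc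
      (c.fst_mem_support_of_mem_edges hab)).exists_ne b
    exact hxb (eq_of_suppGraph_adj_of_tight hγ.1 htight hone hax)
  intro hone
  rcases vertexWeight_eq_one_or_of_suppGraph_adj hγ (c.adj_of_mem_edges huv) with hu | hv
  · exact hno_leaf huv hone hu
  · rw [Sym2.eq_swap] at huv hone
    exact hno_leaf huv hone hv

end FractionalEdgeCover

/-- Every extreme point of the set of fractional edge covers is a basic fractional
edge cover. -/
theorem extremePoint_isBasicFEC [Fintype V] [DecidableEq V] (G : SimpleGraph V)
    (hiso : ∀ v : V, ∃ u, G.Adj v u) (γ : Sym2 V → ℝ)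
    (hγ : γ ∈ (Γfec G).extremePoints ℝ) :
    IsBasicFEC G γ := by
  have hfrac : ∀ {u v}, (suppGraph G γ).Adj u v → γ s(u, v) ≠ 1 → (fracGraph G γ).Adj u v :=
    fun huv hne => fracGraph_adj_iff.mpr ⟨huv, hne⟩
  refine ⟨hγ.1, Sym2.forall.mpr fun u v => ?_, fun u v huv => ?_,
    Sym2.forall.mpr fun u v _ => ⟨fun hhalf => ?_, ?_⟩⟩
  · by_cases huv : (suppGraph G γ).Adj u v
    · exact .inr (or_iff_not_imp_right.mpr fun hne => eq_half_of_fracGraph_adj hγ (hfrac huv hne))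
    · exact .inl (by simpa [suppGraph_adj_iff hγ.1] using huv)
  · by_cases hone : γ s(u, v) = 1
    · exact .inl (isSubstarComponent_of_eq_one hγ huv hone)
    · exact .inr (isOddCycleComponent_of_fracGraph_adj hγ (hfrac huv hone))
  · have huv : (suppGraph G γ).Adj u v := (suppGraph_adj_iff hγ.1).mpr (by norm_num [hhalf])
    obtain ⟨w, c, hc, hodd, -, hedges⟩ :=
      isOddCycleComponent_of_fracGraph_adj hγ (hfrac huv (by norm_num [hhalf]))
    exact ⟨w, c, hc, hodd, hedges u v huv (.refl u)⟩
  · rintro ⟨w, c, hc, -, huv⟩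
    exact eq_half_of_fracGraph_adj hγ
      (hfrac (c.adj_of_mem_edges huv) (ne_one_of_mem_edges_cycle hγ hc huv))
end
end

section
/- Let G be a finite simple bipartite graph with no isolated vertices. Then every basic fractional edge cover of G takes values only in {0,1}, and equals the indicator vector of an edge cover of G; consequently Adm(Γ_fec) = Adm(Γ_ec), and hence Mod_{p,σ}(Γ_fec) = Mod_{p,σ}(Γ_ec) for every p and every edge-weight function σ. -/
open Finset

noncomputable section
open scoped Classical

variable {V : Type*}

/-!
A basic fractional edge cover takes the value 1/2 only on odd cycles, which a bipartite graph does
not have.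

For the admissible densities, let a density `ρ` be the cost of the edges, and let `γ` be a
fractional edge cover with vertex sums `d v = ∑_{e ∈ δ(v)} γ(e) ≥ 1`. Keeping the fraction
`1 / (d u * d v)` of the weight of each edge `uv` turns `γ` into a fractional matching `x`.
Completing every vertex from the slack of `x` along its cheapest edge costs no more than was
thinned out, since `1 / d u + 1 / d v - 1 / (d u * d v) ≤ 1`. Placing the slacks on the diagonal
makes `x` a doubly stochastic `V × V` matrix, so by Birkhoff's theorem some permutation `π`,
moving vertices along edges only, is at most as expensive. In a bipartite graph the edges
`s(v, π v)` leaving one side form a matching whose uncovered vertices are exactly the fixed points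
of `π`; adding the cheapest edge at each of these gives an edge cover whose cost is at most that
of `γ`.
-/

section Birkhoff

variable {R n : Type*} [Fintype n] [DecidableEq n] [Field R] [LinearOrder R]
  [IsStrictOrderedRing R] {M : Matrix n n R}

lemma exists_perm_sum_le_of_mem_doublyStochastic (hM : M ∈ doublyStochastic R n)
    (c : n → n → R) :
    ∃ π : Equiv.Perm n, (∀ i, M i (π i) ≠ 0) ∧ ∑ i, c i (π i) ≤ ∑ i, ∑ j, M i j * c i j := by
  obtain ⟨w, hw, hw_sum, hwM⟩ := exists_eq_sum_perm_of_mem_doublyStochastic hM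
  have entry (i j : n) : M i j = ∑ π, if π i = j then w π else 0 := by
    simp [← hwM, Matrix.sum_apply, Equiv.toPEquiv_apply, eq_comm]
  have average : ∑ π, w π * ∑ i, c i (π i) = ∑ i, ∑ j, M i j * c i j := by
    simp_rw [entry, Finset.sum_mul, ite_mul, zero_mul, Finset.mul_sum]
    rw [Finset.sum_comm]
    refine Finset.sum_congr rfl fun i _ => ?_
    rw [Finset.sum_comm]
    simp
  have restrict (f : Equiv.Perm n → R) : ∑ π with w π ≠ 0, w π * f π = ∑ π, w π * f π :=
    Finset.sum_filter_of_ne fun _ _ => left_ne_zero_of_mul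
  have support_nonempty : ({π | w π ≠ 0} : Finset (Equiv.Perm n)).Nonempty := by
    obtain ⟨π, -, hwπ⟩ := Finset.exists_ne_zero_of_sum_ne_zero (hw_sum.trans_ne one_ne_zero)
    exact ⟨π, by simpa using hwπ⟩
  obtain ⟨π, hπ, hle⟩ := Finset.exists_le_of_sum_le support_nonempty
    (f := fun π => w π * ∑ i, c i (π i)) (g := fun π => w π * ∑ i, ∑ j, M i j * c i j) <| by
      rw [restrict, restrict, average, ← Finset.sum_mul, hw_sum, one_mul]
  have hwπ : 0 < w π := (hw π).lt_of_ne' (Finset.mem_filter.1 hπ).2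
  refine ⟨π, fun i => ?_, le_of_mul_le_mul_left hle hwπ⟩
  rw [entry, ← Finset.sum_filter]
  exact (Finset.sum_pos' (fun π _ => hw π) ⟨π, by simp, hwπ⟩).ne'

end Birkhoff

section IncidenceSums

variable [Fintype V] [DecidableEq V] {G : SimpleGraph V} {M : Type*} [AddCommMonoid M]

lemma sum_incidenceFinset_eq_sum_univ {f : Sym2 V → M} (hf : ∀ e ∉ G.edgeSet, f e = 0) (v : V) :
    ∑ e ∈ G.incidenceFinset v, f e = ∑ u, f s(v, u) := by
  refine Eq.trans ?_ (Finset.sum_map Finset.univ (Sym2.mkEmbedding v) f)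
  refine Finset.sum_subset (fun e he => ?_) fun e he he_inc => hf e fun he_edge => he_inc ?_
  · obtain ⟨u, rfl⟩ := ((G.mem_incidenceFinset v e).1 he).2
    exact Finset.mem_map_of_mem _ (Finset.mem_univ u)
  · obtain ⟨u, -, rfl⟩ := Finset.mem_map.1 he
    exact (G.mem_incidenceFinset v _).2 ⟨he_edge, Sym2.mem_mk_left v u⟩

lemma sum_sum_incidenceFinset_comm (A : Finset V) (f : V → Sym2 V → M) :
    ∑ v ∈ A, ∑ e ∈ G.incidenceFinset v, f v e = ∑ e ∈ G.edgeFinset, ∑ v ∈ A with v ∈ e, f v e :=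
  Finset.sum_comm' fun v e => by
    simp only [SimpleGraph.mem_incidenceFinset, SimpleGraph.incidenceSet, Set.mem_ofPred_eq,
      Finset.mem_filter, SimpleGraph.mem_edgeFinset]
    tauto

lemma sum_sum_incidenceFinset_of_isBipartiteWith {s t : Set V} (hst : G.IsBipartiteWith s t)
    (f : Sym2 V → M) :
    ∑ v with v ∈ s, ∑ e ∈ G.incidenceFinset v, f e = ∑ e ∈ G.edgeFinset, f e := by
  rw [sum_sum_incidenceFinset_comm]
  refine Finset.sum_congr rfl fun e he => ?_
  suffices ∃ v, Finset.filter (· ∈ e) {v | v ∈ s} = {v} by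
    obtain ⟨v, hv⟩ := this
    rw [hv, Finset.sum_singleton]
  induction e using Sym2.ind with
  | _ a b =>
    have hdisj := Set.disjoint_left.1 hst.disjoint
    rcases hst.mem_of_adj (SimpleGraph.mem_edgeFinset.1 he) with ⟨ha, hb⟩ | ⟨ha, hb⟩
    · exact ⟨a, by grind⟩
    · exact ⟨b, by grind⟩

end IncidenceSums

lemma suppGraph_le (G : SimpleGraph V) (γ : Sym2 V → ℝ) : suppGraph G γ ≤ G :=
  fun _ _ h => h.1

section EdgeCover

variable [Fintype V] [DecidableEq V] {G : SimpleGraph V} {γ x ρ : Sym2 V → ℝ} {s t : Set V}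

/-- The total weight at the vertex `v`, the quantity bounded in the definitions of fractional edge
covers and fractional matchings. -/
def vertexSum (G : SimpleGraph V) (γ : Sym2 V → ℝ) (v : V) : ℝ :=
  ∑ e ∈ G.incidenceFinset v, γ e

lemma one_le_vertexSum (hγ : γ ∈ Γfec G) (v : V) : 1 ≤ vertexSum G γ v :=
  hγ.2.2 v

/-- Fractional matchings of `G`, encoded like `Γfec` by nonnegative functions on `Sym2 V`
vanishing outside the edge set. -/
structure IsFractionalMatching (G : SimpleGraph V) (x : Sym2 V → ℝ) : Prop where
  nonneg : ∀ e, 0 ≤ x e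
  eq_zero : ∀ e ∉ G.edgeSet, x e = 0
  vertexSum_le_one : ∀ v, vertexSum G x v ≤ 1

/-- The amount by which a fractional matching `x` fails to cover the vertex `v`. -/
def slack (G : SimpleGraph V) (x : Sym2 V → ℝ) (v : V) : ℝ :=
  1 - vertexSum G x v

/-- The thinning of a weight `γ`, in which each end `v` of an edge independently keeps the
fraction `1 / vertexSum G γ v` of its weight. It turns fractional edge covers into fractional
matchings. -/
def thinning (G : SimpleGraph V) (γ : Sym2 V → ℝ) (e : Sym2 V) : ℝ :=
  γ e * (e.map fun v => (vertexSum G γ v)⁻¹).mul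

lemma thinning_nonneg (hγ : ∀ e, 0 ≤ γ e) (e : Sym2 V) : 0 ≤ thinning G γ e := by
  induction e using Sym2.ind with
  | _ a b =>
    have hinv (v : V) : 0 ≤ (vertexSum G γ v)⁻¹ :=
      inv_nonneg.2 (Finset.sum_nonneg fun e _ => hγ e)
    exact mul_nonneg (hγ _) (mul_nonneg (hinv a) (hinv b))

lemma inv_vertexSum_le_one (hγ : γ ∈ Γfec G) (v : V) : (vertexSum G γ v)⁻¹ ≤ 1 :=
  inv_le_one_of_one_le₀ (one_le_vertexSum hγ v)

lemma sum_mul_inv_vertexSum (hγ : γ ∈ Γfec G) (v : V) :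
    ∑ e ∈ G.incidenceFinset v, γ e * (vertexSum G γ v)⁻¹ = 1 := by
  rw [← Finset.sum_mul]
  exact mul_inv_cancel₀ (zero_lt_one.trans_le (one_le_vertexSum hγ v)).ne'

lemma thinning_le_mul_inv (hγ : γ ∈ Γfec G) {v : V} {e : Sym2 V} (hve : v ∈ e) :
    thinning G γ e ≤ γ e * (vertexSum G γ v)⁻¹ := by
  obtain ⟨u, rfl⟩ := hve
  refine mul_le_mul_of_nonneg_left ?_ (hγ.1 _)
  exact mul_le_of_le_one_right (inv_nonneg.2 (zero_le_one.trans (one_le_vertexSum hγ v)))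
    (inv_vertexSum_le_one hγ u)

lemma isFractionalMatching_thinning (hγ : γ ∈ Γfec G) :
    IsFractionalMatching G (thinning G γ) where
  nonneg := thinning_nonneg hγ.1
  eq_zero e he := by rw [thinning, hγ.2.1 e he, zero_mul]
  vertexSum_le_one v := (Finset.sum_le_sum fun _ he =>
    thinning_le_mul_inv hγ ((G.mem_incidenceFinset v _).1 he).2).trans_eq
      (sum_mul_inv_vertexSum hγ v)

lemma thinning_add_sum_ends_le (hγ : γ ∈ Γfec G) {e : Sym2 V} (he : e ∈ G.edgeSet) :
    thinning G γ e + ∑ v with v ∈ e, (γ e * (vertexSum G γ v)⁻¹ - thinning G γ e) ≤ γ e := by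
  induction e using Sym2.ind with
  | _ a b =>
    have ends : ({v | v ∈ s(a, b)} : Finset V) = {a, b} := by ext v; simp
    rw [ends, Finset.sum_pair (G.ne_of_adj he)]
    simp only [thinning, Sym2.map_mk, Sym2.mul_mk]
    have ha := inv_vertexSum_le_one hγ a
    have hb := inv_vertexSum_le_one hγ b
    nlinarith [mul_nonneg (hγ.1 s(a, b)) (mul_nonneg (sub_nonneg.2 ha) (sub_nonneg.2 hb))]

lemma slack_thinning (hγ : γ ∈ Γfec G) (v : V) :
    slack G (thinning G γ) v =
      ∑ e ∈ G.incidenceFinset v, (γ e * (vertexSum G γ v)⁻¹ - thinning G γ e) := by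
  rw [Finset.sum_sub_distrib, sum_mul_inv_vertexSum hγ, slack, vertexSum]

lemma slack_thinning_mul_le (hγ : γ ∈ Γfec G) {m : ℝ} {v : V}
    (hm : ∀ e ∈ G.incidenceFinset v, m ≤ ρ e) :
    slack G (thinning G γ) v * m ≤
      ∑ e ∈ G.incidenceFinset v, (γ e * (vertexSum G γ v)⁻¹ - thinning G γ e) * ρ e := by
  rw [slack_thinning hγ, Finset.sum_mul]
  refine Finset.sum_le_sum fun e he => mul_le_mul_of_nonneg_left (hm e he) (sub_nonneg.2 ?_)
  exact thinning_le_mul_inv hγ ((G.mem_incidenceFinset v e).1 he).2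

lemma sum_slack_thinning_add_sum_thinning_le (hγ : γ ∈ Γfec G) (hρ : ∀ e, 0 ≤ ρ e) {m : V → ℝ}
    (hm : ∀ v, ∀ e ∈ G.incidenceFinset v, m v ≤ ρ e) :
    ∑ v, slack G (thinning G γ) v * m v + ∑ e ∈ G.edgeFinset, thinning G γ e * ρ e ≤
      ∑ e ∈ G.edgeFinset, γ e * ρ e := by
  calc
    _ ≤ ∑ v, ∑ e ∈ G.incidenceFinset v, (γ e * (vertexSum G γ v)⁻¹ - thinning G γ e) * ρ e +
          ∑ e ∈ G.edgeFinset, thinning G γ e * ρ e := by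
      gcongr with v
      exact slack_thinning_mul_le hγ (hm v)
    _ = ∑ e ∈ G.edgeFinset, (thinning G γ e +
          ∑ v with v ∈ e, (γ e * (vertexSum G γ v)⁻¹ - thinning G γ e)) * ρ e := by
      rw [sum_sum_incidenceFinset_comm, ← Finset.sum_add_distrib]
      simp only [add_mul, Finset.sum_mul, add_comm]
    _ ≤ ∑ e ∈ G.edgeFinset, γ e * ρ e := by
      gcongr with e he
      · exact hρ e
      · exact thinning_add_sum_ends_le hγ (SimpleGraph.mem_edgeFinset.1 he)

/-- The matrix of a weight `x` on pairs of vertices, with the slacks added on the diagonal. It is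
doubly stochastic when `x` is a fractional matching. -/
def slackMatrix (G : SimpleGraph V) (x : Sym2 V → ℝ) : Matrix V V ℝ :=
  Matrix.of (fun u v => x s(u, v)) + Matrix.diagonal (slack G x)

lemma sum_slackMatrix_mul (x : Sym2 V → ℝ) (c : V → V → ℝ) (v : V) :
    ∑ u, slackMatrix G x v u * c v u = ∑ u, x s(v, u) * c v u + slack G x v * c v v := by
  simp [slackMatrix, Matrix.diagonal_apply, add_mul, Finset.sum_add_distrib]

lemma isSymm_slackMatrix (G : SimpleGraph V) (x : Sym2 V → ℝ) : (slackMatrix G x).IsSymm :=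
  (Matrix.IsSymm.ext fun _ _ => congrArg x Sym2.eq_swap).add (Matrix.isSymm_diagonal _)

lemma slackMatrix_mem_doublyStochastic (hx : IsFractionalMatching G x) :
    slackMatrix G x ∈ doublyStochastic ℝ V := by
  have row_sum (v : V) : ∑ u, slackMatrix G x v u = 1 := by
    simp [slackMatrix, Matrix.diagonal_apply, Finset.sum_add_distrib, slack, vertexSum,
      sum_incidenceFinset_eq_sum_univ hx.eq_zero]
  refine mem_doublyStochastic_iff_sum.2 ⟨fun u v => ?_, row_sum, fun v => ?_⟩
  · refine add_nonneg (hx.nonneg _) ?_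
    rw [Matrix.diagonal_apply]
    split_ifs
    exacts [sub_nonneg.2 (hx.vertexSum_le_one u), le_rfl]
  · simpa only [(isSymm_slackMatrix G x).apply] using row_sum v

lemma adj_of_slackMatrix_ne_zero (hx : IsFractionalMatching G x) {u v : V}
    (huv : slackMatrix G x u v ≠ 0) (hne : u ≠ v) : G.Adj u v := by
  by_contra hadj
  exact huv (by simp [slackMatrix, hne, hx.eq_zero s(u, v) hadj])

/-- The cost of sending `v` to `u` in an assignment to be rounded by `permCover`: a fixed vertex
pays for the edge `m v` chosen at `v`, and a vertex of `s` that moves pays for the edge it uses. -/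
def assignmentCost (s : Set V) (m : V → Sym2 V) (ρ : Sym2 V → ℝ) (v u : V) : ℝ :=
  if u = v then ρ (m v) else if v ∈ s then ρ s(v, u) else 0

lemma sum_slackMatrix_mul_assignmentCost (hst : G.IsBipartiteWith s t)
    (hx : ∀ e ∉ G.edgeSet, x e = 0) (m : V → Sym2 V) :
    ∑ v, ∑ u, slackMatrix G x v u * assignmentCost s m ρ v u =
      ∑ v, slack G x v * ρ (m v) + ∑ e ∈ G.edgeFinset, x e * ρ e := by
  have hxρ : ∀ e ∉ G.edgeSet, x e * ρ e = 0 := fun e he => by rw [hx e he, zero_mul]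
  rw [← sum_sum_incidenceFinset_of_isBipartiteWith hst, Finset.sum_filter, ← Finset.sum_add_distrib]
  refine Finset.sum_congr rfl fun v _ => ?_
  have x_loop : x s(v, v) = 0 := hx _ G.irrefl
  have edge_part : ∑ u, x s(v, u) * assignmentCost s m ρ v u =
      if v ∈ s then ∑ u, x s(v, u) * ρ s(v, u) else 0 := by
    split_ifs with hv
    · exact Finset.sum_congr rfl fun u _ => by unfold assignmentCost; grind
    · exact Finset.sum_eq_zero fun u _ => by unfold assignmentCost; grind
  rw [sum_slackMatrix_mul, edge_part, sum_incidenceFinset_eq_sum_univ hxρ, assignmentCost,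
    if_pos rfl, add_comm]

/-- The edge cover read off a permutation `π`: the edges along which the vertices of `s` move,
together with the edge `m v` at each fixed point `v`. -/
def permCover (s : Set V) (m : V → Sym2 V) (π : Equiv.Perm V) : Finset (Sym2 V) :=
  Finset.image (fun v => if π v = v then m v else s(v, π v)) {v | π v = v ∨ v ∈ s}

lemma isEdgeCover_permCover (hst : G.IsBipartiteWith s t) {m : V → Sym2 V}
    (hm : ∀ v, m v ∈ G.incidenceFinset v) {π : Equiv.Perm V}
    (hπ : ∀ v, π v ≠ v → G.Adj v (π v)) : IsEdgeCover G (permCover s m π) := by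
  simp only [SimpleGraph.mem_incidenceFinset] at hm
  have hmoved {v : V} (hv : v ∈ s) (hne : π v ≠ v) : s(v, π v) ∈ permCover s m π :=
    Finset.mem_image.2 ⟨v, by simp [hv], if_neg hne⟩
  refine ⟨fun e he => ?_, fun w => ?_⟩
  · obtain ⟨v, -, rfl⟩ := Finset.mem_image.1 (Finset.mem_coe.1 he)
    split_ifs with hv
    exacts [(hm v).1, hπ v hv]
  · by_cases hw : π w = w
    · exact ⟨m w, Finset.mem_image.2 ⟨w, by simp [hw], if_pos hw⟩, (hm w).2⟩
    rcases hst.mem_of_adj (hπ w hw) with ⟨hws, -⟩ | ⟨hwt, -⟩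
    · exact ⟨s(w, π w), hmoved hws hw, Sym2.mem_mk_left _ _⟩
    · -- `w` lies on the other side, so it is covered by the edge along which its preimage moves.
      obtain ⟨v, rfl⟩ := π.surjective w
      have hv : π v ≠ v := fun h => hw (congrArg π h)
      have hvs : v ∈ s := (hst.mem_of_adj (hπ v hv)).elim And.left fun h =>
        absurd hwt (Set.disjoint_left.1 hst.disjoint h.2)
      exact ⟨s(v, π v), hmoved hvs hv, Sym2.mem_mk_right _ _⟩

lemma sum_permCover_le (hρ : ∀ e, 0 ≤ ρ e) (m : V → Sym2 V) (π : Equiv.Perm V) :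
    ∑ e ∈ permCover s m π, ρ e ≤ ∑ v, assignmentCost s m ρ v (π v) := by
  refine (Finset.sum_image_le_of_nonneg fun e _ => hρ e).trans_eq ?_
  rw [Finset.sum_filter]
  refine Finset.sum_congr rfl fun v _ => ?_
  unfold assignmentCost
  grind

lemma exists_isEdgeCover_sum_le (hG : G.IsBipartite) (hγ : γ ∈ Γfec G) (hρ : ∀ e, 0 ≤ ρ e) :
    ∃ C, IsEdgeCover G C ∧ ∑ e ∈ C, ρ e ≤ ∑ e ∈ G.edgeFinset, γ e * ρ e := by
  obtain ⟨s, t, hst⟩ := hG.exists_isBipartiteWith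
  have incident (v : V) : (G.incidenceFinset v).Nonempty :=
    Finset.nonempty_of_sum_ne_zero (zero_lt_one.trans_le (one_le_vertexSum hγ v)).ne'
  choose m hm hm_le using fun v => Finset.exists_min_image _ ρ (incident v)
  have hx := isFractionalMatching_thinning hγ
  obtain ⟨π, hπ, hπ_le⟩ := exists_perm_sum_le_of_mem_doublyStochastic
    (slackMatrix_mem_doublyStochastic hx) (assignmentCost s m ρ)
  refine ⟨permCover s m π, isEdgeCover_permCover hst hm fun v hv =>
    adj_of_slackMatrix_ne_zero hx (hπ v) hv.symm, ?_⟩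
  calc
    ∑ e ∈ permCover s m π, ρ e
      ≤ ∑ v, assignmentCost s m ρ v (π v) := sum_permCover_le hρ m π
    _ ≤ ∑ v, ∑ u, slackMatrix G (thinning G γ) v u * assignmentCost s m ρ v u := hπ_le
    _ = ∑ v, slack G (thinning G γ) v * ρ (m v) + ∑ e ∈ G.edgeFinset, thinning G γ e * ρ e :=
      sum_slackMatrix_mul_assignmentCost hst hx.eq_zero m
    _ ≤ ∑ e ∈ G.edgeFinset, γ e * ρ e := sum_slack_thinning_add_sum_thinning_le hγ hρ hm_le

lemma IsEdgeCover.sum_indicator_mul {C : Finset (Sym2 V)} (hC : IsEdgeCover G C) :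
    ∑ e ∈ G.edgeFinset, (if e ∈ C then 1 else 0) * ρ e = ∑ e ∈ C, ρ e := by
  have hCG : C ⊆ G.edgeFinset := fun e he => SimpleGraph.mem_edgeFinset.2 (hC.1 he)
  simp [Finset.inter_eq_right.2 hCG]

lemma Γec_subset_Γfec : Γec G ⊆ Γfec G := by
  rintro γ ⟨C, ⟨hC, hcover⟩, rfl⟩
  refine ⟨fun e => by positivity, fun e he => if_neg fun heC => he (hC heC), fun v => ?_⟩
  obtain ⟨e, he, hve⟩ := hcover v
  calc
    (1 : ℝ) = if e ∈ C then 1 else 0 := (if_pos he).symm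
    _ ≤ ∑ e ∈ G.incidenceFinset v, if e ∈ C then 1 else 0 :=
      Finset.single_le_sum (f := fun e => if e ∈ C then (1 : ℝ) else 0)
        (fun e _ => by positivity) ((G.mem_incidenceFinset v e).2 ⟨hC he, hve⟩)

lemma mem_Γec_of_mem_Γfec (hγ : γ ∈ Γfec G) (h01 : ∀ e, γ e = 0 ∨ γ e = 1) : γ ∈ Γec G := by
  obtain ⟨-, hoff, hcover⟩ := hγ
  refine ⟨Finset.univ.filter (γ · = 1), ⟨fun e he => ?_, fun v => ?_⟩, ?_⟩
  · by_contra hne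
    simp [hoff e hne] at he
  · obtain ⟨e, he, hγe⟩ :=
      Finset.exists_ne_zero_of_sum_ne_zero (zero_lt_one.trans_le (hcover v)).ne'
    exact ⟨e, by simpa using (h01 e).resolve_left hγe, ((G.mem_incidenceFinset v e).1 he).2⟩
  · ext e
    rcases h01 e with h | h <;> simp [h]

lemma Adm_anti {Γ Γ' : Set (Sym2 V → ℝ)} (h : Γ ⊆ Γ') : Adm G Γ' ⊆ Adm G Γ :=
  fun _ ⟨hnonneg, hoff, hadm⟩ => ⟨hnonneg, hoff, fun γ hγ => hadm γ (h hγ)⟩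

theorem Adm_Γfec_eq_Adm_Γec (hG : G.IsBipartite) : Adm G (Γfec G) = Adm G (Γec G) := by
  refine (Adm_anti Γec_subset_Γfec).antisymm ?_
  rintro ρ ⟨hρ, hoff, hadm⟩
  refine ⟨hρ, hoff, fun γ hγ => ?_⟩
  obtain ⟨C, hC, hle⟩ := exists_isEdgeCover_sum_le hG hγ hρ
  exact (hadm _ ⟨C, hC, rfl⟩).trans (hC.sum_indicator_mul.trans_le hle)

lemma IsBasicFEC.eq_zero_or_eq_one (hG : G.IsBipartite) (hγ : IsBasicFEC G γ) (e : Sym2 V) :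
    γ e = 0 ∨ γ e = 1 := by
  obtain ⟨⟨-, hoff, -⟩, hvalues, -, hhalf⟩ := hγ
  rcases hvalues e with h0 | h_half | h1
  · exact Or.inl h0
  · have he : e ∈ G.edgeSet := by
      by_contra hne
      norm_num [hoff e hne] at h_half
    obtain ⟨w, c, -, hodd, -⟩ := (hhalf e he).1 h_half
    have heven : Even c.length :=
      SimpleGraph.two_colorable_iff_forall_loop_even.1 (hG.mono_left (suppGraph_le G γ)) w c
    exact absurd heven (Nat.not_even_iff_odd.2 hodd)
  · exact Or.inr h1

end EdgeCover

/-- For a bipartite graph: every basic fractional edge cover takes values only in `{0,1}`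
and is the indicator vector of an edge cover; consequently `Adm(Γ_fec) = Adm(Γ_ec)` and
`Mod_{p,σ}(Γ_fec) = Mod_{p,σ}(Γ_ec)` for every `p` and every positive weight `σ`. -/
theorem bipartite_fec_eq_ec [Fintype V] [DecidableEq V] (G : SimpleGraph V)
    (hiso : ∀ v : V, ∃ u, G.Adj v u) (hbip : G.Colorable 2) :
    (∀ γ : Sym2 V → ℝ, IsBasicFEC G γ →
      (∀ e, γ e = 0 ∨ γ e = 1) ∧
      ∃ C : Finset (Sym2 V), IsEdgeCover G C ∧ γ = fun e => if e ∈ C then 1 else 0) ∧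
    Adm G (Γfec G) = Adm G (Γec G) ∧
    ∀ p : ℝ, 1 ≤ p → ∀ σ : Sym2 V → ℝ, (∀ e, 0 < σ e) →
      Modulus p σ G (Γfec G) = Modulus p σ G (Γec G) := by
  refine ⟨fun γ hγ => ?_, Adm_Γfec_eq_Adm_Γec hbip, fun p _ σ _ => ?_⟩
  · have h01 := hγ.eq_zero_or_eq_one hbip
    exact ⟨h01, mem_Γec_of_mem_Γfec hγ.1 h01⟩
  · rw [Modulus, Modulus, Adm_Γfec_eq_Adm_Γec hbip]
end
end
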